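/- arXiv:0908.4073 — 3 statements merged into one kernel-verified Lean document; each statement's English description precedes it below -/
import Mathlib

section
/- For every finite connected graph G = (V,E) with n vertices and diameter D ≥ 1, and every probability distribution π on V with π_u > 0 for all u ∈ V, there exist a finite set V̂ with |V̂| ≤ 2nD + 1, a row-stochastic matrix P̂ on V̂ with a positive stationary distribution π̂, a map f : V̂ → V and a subset T ⊆ V̂ with |T| = |V|, such that: (a) P̂ is a pseudo-lifting of π on G with respect to f and T; (b) the number of pairs (û,v̂) with û ≠ v̂ and P̂_{ûv̂} > 0 is at most |E| + 2nD; and (c) there is an absolute constant C > 0 (independent of G, n, D, π) such that for every t ≥ C·D and every starting state û ∈ V̂, (1/2)·Σ_{v̂∈V̂} |P̂^t(û,v̂) − π̂(v̂)| ≤ 1/4. -/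
/-!
Write `D = d + 1` and fix a root `r`. The lifted walk is a bouquet of cycles through one hub state
lying over `r`. The cycle of a vertex `v` has `2d + 1` further states; it follows a geodesic from
`r` to `v`, waiting at `v` so that it arrives after exactly `D` steps, and then retraces it. Its
middle state lies over `v`, and `T` is the set of middle states. The walk rests at the hub with
probability `1 - 1/(2D)` and otherwise enters the cycle of `v` with probability proportional to
`π v`; on a cycle it moves forward, except that it leaves the middle state only with probability
`1/(4D - 2)`. The stationary flow through the cycle of `v` is then constantly `π v / (8D - 4)`, so
the middle state has mass exactly `π v / 2`. There are `n(2D - 1) + 1` states and `2nD` arcs.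

Mixing is Doeblin's argument: every state is at the hub after exactly `6D` steps with probability at
least `1/128` (`minorize`): it reaches the middle of its cycle within `D` steps, leaves it within
`4D` steps with probability at least `1/2`, reaches the hub within `D` further steps, and
then rests there with probability at least `(1 - 1/(2D)) ^ (6D) ≥ 1/64`. Hence `P ^ (6D)` contracts
the `ℓ¹` norm of zero-sum vectors by `127/128` (`vecMul_contract`), and 256 such blocks suffice.
-/

/-- A matrix is row-stochastic: nonnegative entries and each row sums to 1. -/
def RowStochastic {W : Type*} [Fintype W] (P : Matrix W W ℝ) : Prop :=
  (∀ i j, 0 ≤ P i j) ∧ ∀ i, ∑ j, P i j = 1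

/-- `π` is a stationary distribution for `P`: `πᵀP = πᵀ`. -/
def Stationary {W : Type*} [Fintype W] (P : Matrix W W ℝ) (π : W → ℝ) : Prop :=
  ∀ j, ∑ i, π i * P i j = π j

namespace PseudoLift

set_option linter.unusedSectionVars false

open Matrix

/-! ### Doeblin's contraction argument -/

section Doeblin

variable {W : Type} [Fintype W] [DecidableEq W]

lemma rowStochastic_mul {P Q : Matrix W W ℝ} (hP : RowStochastic P) (hQ : RowStochastic Q) :
    RowStochastic (P * Q) := by
  refine ⟨fun i j => ?_, fun i => ?_⟩
  · rw [Matrix.mul_apply]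
    exact Finset.sum_nonneg fun k _ => mul_nonneg (hP.1 _ _) (hQ.1 _ _)
  · simp_rw [Matrix.mul_apply]
    rw [Finset.sum_comm]
    simp_rw [← Finset.mul_sum, hQ.2, mul_one]
    exact hP.2 i

lemma rowStochastic_pow {P : Matrix W W ℝ} (hP : RowStochastic P) (t : ℕ) :
    RowStochastic (P ^ t) := by
  induction t with
  | zero =>
    refine ⟨fun i j => ?_, fun i => ?_⟩
    · simp only [pow_zero, Matrix.one_apply]
      split_ifs <;> norm_num
    · simp [Matrix.one_apply]
  | succ t ih => rw [pow_succ]; exact rowStochastic_mul ih hP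

lemma vecMul_sum {Q : Matrix W W ℝ} (hQ : RowStochastic Q) (μ : W → ℝ) :
    ∑ j, (μ ᵥ* Q) j = ∑ i, μ i := by
  simp only [Matrix.vecMul, dotProduct]
  rw [Finset.sum_comm]
  simp_rw [← Finset.mul_sum, hQ.2, mul_one]

/-- If every row of `Q` charges the state `r` with at least `ε`, then `Q` contracts the `ℓ¹` norm of
zero-sum vectors by `1 - ε`, since `ε` may be subtracted from the column of `r`. -/
lemma vecMul_contract {Q : Matrix W W ℝ} (hQ : RowStochastic Q) (r : W) (ε : ℝ)
    (hr : ∀ i, ε ≤ Q i r) (μ : W → ℝ) (hμ : ∑ i, μ i = 0) :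
    ∑ j, |(μ ᵥ* Q) j| ≤ (1 - ε) * ∑ i, |μ i| := by
  have key : ∀ j, (μ ᵥ* Q) j = ∑ i, μ i * (Q i j - if j = r then ε else 0) := by
    intro j
    simp only [Matrix.vecMul, dotProduct, mul_sub, Finset.sum_sub_distrib]
    rw [← Finset.sum_mul, hμ]
    ring
  have hnn : ∀ i j, 0 ≤ Q i j - if j = r then ε else 0 := by
    intro i j
    split_ifs with h
    · subst h; linarith [hr i]
    · linarith [hQ.1 i j]
  calc ∑ j, |(μ ᵥ* Q) j|
      ≤ ∑ j, ∑ i, |μ i| * (Q i j - if j = r then ε else 0) := by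
        refine Finset.sum_le_sum fun j _ => ?_
        rw [key j]
        refine (Finset.abs_sum_le_sum_abs _ _).trans_eq ?_
        refine Finset.sum_congr rfl fun i _ => ?_
        rw [abs_mul, abs_of_nonneg (hnn i j)]
    _ = (1 - ε) * ∑ i, |μ i| := by
        rw [Finset.sum_comm]
        simp_rw [← Finset.mul_sum, Finset.sum_sub_distrib, hQ.2]
        simp [Finset.mul_sum, mul_comm]

lemma stationary_pow {P : Matrix W W ℝ} {p : W → ℝ} (hp : Stationary P p) (t : ℕ) :
    p ᵥ* (P ^ t) = p := by
  induction t with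
  | zero => simp
  | succ t ih =>
    rw [pow_succ, ← Matrix.vecMul_vecMul, ih]
    funext j
    exact hp j

lemma contract_pow {Q : Matrix W W ℝ} (hQ : RowStochastic Q) (r : W) (ε : ℝ) (hε : ε ≤ 1)
    (hr : ∀ i, ε ≤ Q i r) (μ : W → ℝ) (hμ : ∑ i, μ i = 0) (q : ℕ) :
    ∑ j, |(μ ᵥ* Q ^ q) j| ≤ (1 - ε) ^ q * ∑ i, |μ i| := by
  induction q with
  | zero => simp
  | succ q ih =>
    rw [pow_succ, ← Matrix.vecMul_vecMul]
    refine (vecMul_contract hQ r ε hr _ ?_).trans ?_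
    · rw [vecMul_sum (rowStochastic_pow hQ q), hμ]
    · calc (1 - ε) * ∑ i, |(μ ᵥ* Q ^ q) i|
          ≤ (1 - ε) * ((1 - ε) ^ q * ∑ i, |μ i|) :=
            mul_le_mul_of_nonneg_left ih (by linarith)
        _ = _ := by ring

lemma doeblin {P : Matrix W W ℝ} (hP : RowStochastic P) {p : W → ℝ} (hp : Stationary P p)
    (hp0 : ∀ w, 0 < p w) (hp1 : ∑ w, p w = 1) (r : W) (ε : ℝ) (hε : ε ≤ 1) (m : ℕ)
    (hr : ∀ i, ε ≤ (P ^ m) i r) (q t : ℕ) (ht : m * q ≤ t) (x : W) :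
    (1 / 2) * ∑ y, |(P ^ t) x y - p y| ≤ (1 - ε) ^ q := by
  obtain ⟨s, rfl⟩ := Nat.exists_eq_add_of_le ht
  set μ : W → ℝ := Pi.single x 1 - p with hμdef
  have hμ : ∑ i, μ i = 0 := by
    simp [hμdef, Finset.sum_sub_distrib, hp1]
  have hrow : ∀ t y, (P ^ t) x y - p y = (μ ᵥ* P ^ t) y := by
    intro t y
    rw [hμdef, Matrix.sub_vecMul, stationary_pow hp]
    simp
  have hnorm : ∑ i, |μ i| ≤ 2 := by
    calc ∑ i, |μ i| ≤ ∑ i, ((Pi.single x 1 : W → ℝ) i + p i) := by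
          refine Finset.sum_le_sum fun i _ => ?_
          have h0 : 0 ≤ (Pi.single x 1 : W → ℝ) i := by
            by_cases h : i = x
            · subst h; simp
            · simp [h]
          rw [hμdef, Pi.sub_apply, abs_le]
          constructor <;> linarith [hp0 i]
      _ = 2 := by
          rw [Finset.sum_add_distrib, hp1]
          simp
          norm_num
  simp_rw [hrow]
  rw [pow_add, pow_mul, ← Matrix.vecMul_vecMul]
  have hQ := rowStochastic_pow hP m
  -- the `s` left-over steps do not increase the norm
  have h1 := vecMul_contract (rowStochastic_pow hP s) r 0
    (fun i => (rowStochastic_pow hP s).1 i r) (μ ᵥ* (P ^ m) ^ q)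
    (by rw [vecMul_sum (rowStochastic_pow hQ q), hμ])
  have h2 := contract_pow hQ r ε hε hr μ hμ q
  have h3 : (1 - ε) ^ q * ∑ i, |μ i| ≤ (1 - ε) ^ q * 2 :=
    mul_le_mul_of_nonneg_left hnorm (pow_nonneg (by linarith) _)
  linarith

end Doeblin

/-! ### The bouquet of cycles -/

section Chain

variable {V : Type} [Fintype V] [DecidableEq V]

/-- The lifted state space: the hub `none`, and the states `some (v, i)`, `0 ≤ i ≤ 2d`, of the cycle
of `v` in the order in which they are visited; the middle one is `i = d`. -/
abbrev States (V : Type) (d : ℕ) : Type := Option (V × Fin (2 * d + 1))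

/-- The `i`-th state of the cycle of `v`; the cycle is back at the hub for `i > 2d`. -/
def node (d : ℕ) (v : V) (i : ℕ) : States V d :=
  if h : i < 2 * d + 1 then some (v, ⟨i, h⟩) else none

/-- The probability of staying at a cycle state: `1 - 1/(4d+2)` at the middle, `0` elsewhere. -/
noncomputable def hold (d : ℕ) (i : ℕ) : ℝ := if i = d then 1 - 1 / (4 * d + 2) else 0

/-- The transition matrix of the lifted walk. -/
noncomputable def chain (d : ℕ) (π : V → ℝ) : Matrix (States V d) (States V d) ℝ
  | none, none => 1 - 1 / (2 * d + 2)
  | none, some (v, i) => if i.val = 0 then 1 / (2 * d + 2) * π v else 0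
  | some (v, i), y => hold d i * (if y = some (v, i) then 1 else 0) +
      (1 - hold d i) * (if y = node d v (i + 1) then 1 else 0)

/-- The stationary distribution: the flow through the cycle of `v` is `π v / (8d+4)`, multiplied by
the mean holding time of each state. -/
noncomputable def stat (d : ℕ) (π : V → ℝ) : States V d → ℝ
  | none => (2 * d + 2) / (8 * d + 4)
  | some (v, i) => π v / (8 * d + 4) * (if i.val = d then 4 * (d : ℝ) + 2 else 1)

lemma hold_nonneg (d i : ℕ) : 0 ≤ hold d i := by
  unfold hold
  split_ifs
  · rw [sub_nonneg, div_le_one (by positivity)]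
    have : (0 : ℝ) ≤ d := Nat.cast_nonneg d
    linarith
  · exact le_rfl

lemma hold_lt_one (d i : ℕ) : hold d i < 1 := by
  unfold hold
  split_ifs
  · have : (0 : ℝ) < 1 / (4 * d + 2) := by positivity
    linarith
  · norm_num

lemma chain_stochastic (d : ℕ) (π : V → ℝ) (hπ : ∀ u, 0 < π u) (h1 : ∑ u, π u = 1) :
    RowStochastic (chain d π) := by
  have hd : (0 : ℝ) ≤ d := Nat.cast_nonneg d
  refine ⟨?_, ?_⟩
  · rintro (_ | ⟨v, i⟩) y
    · rcases y with _ | ⟨w, j⟩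
      · simp only [chain]
        rw [sub_nonneg, div_le_one (by positivity)]
        linarith
      · simp only [chain]
        have := (hπ w).le
        split_ifs <;> positivity
    · simp only [chain]
      have := hold_nonneg d i
      have := sub_nonneg.2 (hold_lt_one d i).le
      refine add_nonneg (mul_nonneg ‹_› ?_) (mul_nonneg ‹_› ?_) <;> split_ifs <;> norm_num
  · rintro (_ | ⟨v, i⟩)
    · rw [Fintype.sum_option]
      simp only [chain]
      rw [Fintype.sum_prod_type]
      have : ∀ v : V, ∑ j : Fin (2 * d + 1),
          (if j.val = 0 then 1 / (2 * (d : ℝ) + 2) * π v else 0) = 1 / (2 * d + 2) * π v := by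
        intro v
        rw [Finset.sum_eq_single (⟨0, by omega⟩ : Fin (2 * d + 1))]
        · simp
        · intro b _ hb
          rw [if_neg]
          exact fun h => hb (Fin.ext h)
        · simp
      simp_rw [this, ← Finset.mul_sum, h1]
      ring
    · simp only [chain]
      rw [Finset.sum_add_distrib, ← Finset.mul_sum, ← Finset.mul_sum]
      simp

lemma stat_pos (d : ℕ) (π : V → ℝ) (hπ : ∀ u, 0 < π u) (w : States V d) : 0 < stat d π w := by
  rcases w with _ | ⟨v, i⟩
  · simp only [stat]; positivity
  · simp only [stat]
    have := hπ v
    split_ifs <;> positivity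

lemma stat_sum (d : ℕ) (π : V → ℝ) (h1 : ∑ u, π u = 1) : ∑ w, stat d π w = 1 := by
  rw [Fintype.sum_option, Fintype.sum_prod_type]
  simp only [stat]
  have h : ∑ i : Fin (2 * d + 1), (if i.val = d then 4 * (d : ℝ) + 2 else 1) = 6 * d + 2 := by
    have : ∀ i : Fin (2 * d + 1), (if i.val = d then 4 * (d : ℝ) + 2 else 1)
        = (if i = ⟨d, by omega⟩ then 4 * (d : ℝ) + 1 else 0) + 1 := by
      intro i
      by_cases h : i.val = d
      · rw [if_pos h, if_pos (Fin.ext h)]; ring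
      · rw [if_neg h, if_neg (fun h' => h (by rw [h']))]; ring
    simp_rw [this, Finset.sum_add_distrib]
    simp
    ring
  simp_rw [← Finset.mul_sum, h, ← Finset.sum_mul, ← Finset.sum_div, h1]
  field_simp
  ring

/-- The flow out of every state of the cycle of `v` is `π v / (8d+4)`. -/
lemma stat_flow (d : ℕ) (π : V → ℝ) (v : V) (i : Fin (2 * d + 1)) :
    stat d π (some (v, i)) * (1 - hold d i) = π v / (8 * d + 4) := by
  simp only [stat, hold]
  split_ifs
  · field_simp
    ring
  · ring

lemma stat_stationary (d : ℕ) (π : V → ℝ) (h1 : ∑ u, π u = 1) :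
    Stationary (chain d π) (stat d π) := by
  intro y
  rw [Fintype.sum_option]
  -- the inflow along cycle arcs splits into the held mass and the advancing flow
  have hsplit : ∑ x : V × Fin (2 * d + 1), stat d π (some x) * chain d π (some x) y
      = ∑ x : V × Fin (2 * d + 1),
          (if y = some x then stat d π (some x) * hold d x.2 else 0)
        + ∑ v : V, π v / (8 * d + 4) *
          ∑ i : Fin (2 * d + 1), (if y = node d v (i + 1) then 1 else 0) := by
    simp_rw [Finset.mul_sum]
    rw [← Fintype.sum_prod_type' (f := fun (v : V) (i : Fin (2 * d + 1)) =>
      π v / (8 * d + 4) * (if y = node d v (i + 1) then 1 else 0)), ← Finset.sum_add_distrib]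
    refine Finset.sum_congr rfl fun x _ => ?_
    obtain ⟨v, i⟩ := x
    rw [← stat_flow d π v i]
    simp only [chain]
    split_ifs <;> ring
  rw [hsplit]
  rcases y with _ | ⟨w, j⟩
  · have : ∀ v : V, ∑ i : Fin (2 * d + 1),
        (if (none : States V d) = node d v (i + 1) then (1 : ℝ) else 0) = 1 := by
      intro v
      rw [Finset.sum_eq_single (⟨2 * d, by omega⟩ : Fin (2 * d + 1))]
      · simp [node]
      · intro b _ hb
        have : b.val + 1 < 2 * d + 1 := by
          have := b.2
          have : b.val ≠ 2 * d := fun h => hb (Fin.ext h)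
          omega
        simp [node, this]
      · simp
    simp_rw [this, mul_one, ← Finset.sum_div, h1]
    simp only [stat, chain]
    simp
    field_simp
    ring
  · have h2 : ∑ v : V, π v / (8 * (d : ℝ) + 4) *
          ∑ i : Fin (2 * d + 1), (if some (w, j) = node d v (i + 1) then (1 : ℝ) else 0)
        = π w / (8 * d + 4) * (if j.val = 0 then 0 else 1) := by
      rw [Finset.sum_eq_single w]
      · congr 1
        split_ifs with h0
        · refine Finset.sum_eq_zero fun i _ => ?_
          rw [if_neg]
          unfold node
          split_ifs
          · intro h
            simp only [Option.some.injEq, Prod.mk.injEq, Fin.ext_iff] at h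
            omega
          · simp
        · have hj := j.2
          rw [Finset.sum_eq_single (⟨j.val - 1, by omega⟩ : Fin (2 * d + 1))]
          · have e : j.val - 1 + 1 = j.val := by omega
            simp [node, e, Nat.lt_succ_iff.1 hj]
          · intro b _ hb
            rw [if_neg]
            unfold node
            split_ifs
            · intro h
              simp only [Option.some.injEq, Prod.mk.injEq, Fin.ext_iff] at h
              exact hb (Fin.ext (by simp; omega))
            · simp
          · simp
      · intro v _ hv
        rw [Finset.sum_eq_zero, mul_zero]
        intro i _
        rw [if_neg]
        unfold node
        split_ifs
        · intro h
          simp only [Option.some.injEq, Prod.mk.injEq] at h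
          exact hv h.1.symm
        · simp
      · simp
    have h3 : ∑ x : V × Fin (2 * d + 1),
          (if some (w, j) = some x then stat d π (some x) * hold d x.2 else 0)
        = stat d π (some (w, j)) * hold d j := by
      simp
    rw [h2, h3]
    have h4 := stat_flow d π w j
    have h5 : stat d π none * chain d π none (some (w, j))
        = π w / (8 * d + 4) * (if j.val = 0 then 1 else 0) := by
      simp only [stat, chain]
      split_ifs
      · field_simp
      · simp
    rw [h5]
    split_ifs <;> linarith

/-! ### The probability of being at the hub after `6D` steps -/

lemma pow_hub (d : ℕ) (π : V → ℝ) (hP : RowStochastic (chain d π)) (t : ℕ) :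
    (1 - 1 / (2 * d + 2) : ℝ) ^ t ≤ (chain d π ^ t) none none := by
  induction t with
  | zero => simp
  | succ t ih =>
    rw [pow_succ', pow_succ', Matrix.mul_apply]
    have h0 : (0 : ℝ) ≤ chain d π none none := hP.1 none none
    calc _ ≤ chain d π none none * (chain d π ^ t) none none := by
            have : chain d π none none = 1 - 1 / (2 * d + 2) := rfl
            rw [← this] at ih ⊢
            exact mul_le_mul_of_nonneg_left ih h0
      _ ≤ _ := Finset.single_le_sum
            (f := fun k => chain d π none k * (chain d π ^ t) k none)
            (fun k _ => mul_nonneg (hP.1 _ _) ((rowStochastic_pow hP t).1 _ _)) (Finset.mem_univ _)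

lemma pow_hub_ge (d : ℕ) (π : V → ℝ) (hP : RowStochastic (chain d π)) (t : ℕ)
    (ht : t ≤ 6 * (d + 1)) : (1 / 64 : ℝ) ≤ (chain d π ^ t) none none := by
  refine le_trans ?_ (pow_hub d π hP t)
  have hd : (0 : ℝ) ≤ d := Nat.cast_nonneg d
  have hle : (1 : ℝ) / (2 * d + 2) ≤ 1 := by
    rw [div_le_one (by positivity)]; linarith
  have hpos : (0 : ℝ) ≤ 1 / (2 * d + 2) := by positivity
  have hb : (1 / 2 : ℝ) ≤ (1 - 1 / (2 * d + 2) : ℝ) ^ (d + 1) := by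
    have := one_add_mul_le_pow (a := -(1 / (2 * (d : ℝ) + 2))) (by linarith) (d + 1)
    rw [← sub_eq_add_neg] at this
    refine le_trans (le_of_eq ?_) this
    push_cast
    field_simp
    ring
  calc (1 / 64 : ℝ) = (1 / 2) ^ 6 := by norm_num
    _ ≤ ((1 - 1 / (2 * d + 2) : ℝ) ^ (d + 1)) ^ 6 := by gcongr
    _ = (1 - 1 / (2 * d + 2) : ℝ) ^ (6 * (d + 1)) := by rw [← pow_mul, mul_comm 6]
    _ ≤ _ := pow_le_pow_of_le_one (by linarith) (by linarith) ht

/-- First-step analysis on a cycle. -/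
lemma pow_step (d : ℕ) (π : V → ℝ) (v : V) (i : ℕ) (hi : i < 2 * d + 1) (t : ℕ) :
    (chain d π ^ (t + 1)) (node d v i) none
      = hold d i * (chain d π ^ t) (node d v i) none
        + (1 - hold d i) * (chain d π ^ t) (node d v (i + 1)) none := by
  rw [pow_succ', Matrix.mul_apply]
  have : node d v i = some (v, ⟨i, hi⟩) := by simp [node, hi]
  rw [this]
  simp only [chain, add_mul, mul_assoc, Finset.sum_add_distrib, ← Finset.mul_sum]
  simp

lemma pow_late (d : ℕ) (π : V → ℝ) (hP : RowStochastic (chain d π)) (v : V) (k : ℕ) :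
    ∀ i t, d < i → 2 * d + 1 ≤ i + k → k ≤ t → t ≤ 6 * (d + 1) →
      (1 / 64 : ℝ) ≤ (chain d π ^ t) (node d v i) none := by
  induction k with
  | zero =>
    intro i t _ h2 _ h4
    have : node d v i = none := by simp [node]; omega
    rw [this]
    exact pow_hub_ge d π hP t h4
  | succ k ih =>
    intro i t h1 h2 h3 h4
    by_cases hi : i < 2 * d + 1
    · obtain ⟨t, rfl⟩ : ∃ s, t = s + 1 := ⟨t - 1, by omega⟩
      rw [pow_step d π v i hi]
      have : hold d i = 0 := by simp [hold, h1.ne']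
      rw [this]
      have := ih (i + 1) t (by omega) (by omega) (by omega) (by omega)
      linarith
    · exact ih i t h1 (by omega) (by omega) h4

lemma pow_middle (d : ℕ) (π : V → ℝ) (hP : RowStochastic (chain d π)) (v : V) (s : ℕ)
    (hs : d + s ≤ 6 * (d + 1)) :
    (1 / 64 : ℝ) * (1 - hold d d ^ s) ≤ (chain d π ^ (d + s)) (node d v d) none := by
  induction s with
  | zero => simpa using (rowStochastic_pow hP d).1 _ _
  | succ s ih =>
    rw [← add_assoc, pow_step d π v d (by omega)]
    have h1 := ih (by omega)
    have h2 := pow_late d π hP v d (d + 1) (d + s) (by omega) (by omega) (by omega) (by omega)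
    have h3 := mul_le_mul_of_nonneg_left h1 (hold_nonneg d d)
    have h4 := mul_le_mul_of_nonneg_left h2 (sub_nonneg.2 (hold_lt_one d d).le)
    calc _ = hold d d * (1 / 64 * (1 - hold d d ^ s)) + (1 - hold d d) * (1 / 64) := by ring
      _ ≤ _ := add_le_add h3 h4

/-- Four times `D` steps are at least the mean holding time, so the middle is left with probability
at least one half. -/
lemma hold_pow_le (d s : ℕ) (hs : 4 * (d + 1) ≤ s) : hold d d ^ s ≤ 1 / 2 := by
  have hd : (0 : ℝ) ≤ d := Nat.cast_nonneg d
  refine (pow_le_pow_of_le_one (hold_nonneg d d) (hold_lt_one d d).le hs).trans ?_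
  have hle : hold d d ≤ (1 + 1 / (4 * d + 2 : ℝ))⁻¹ := by
    simp only [hold, if_true]
    have hx : (0 : ℝ) ≤ 1 / (4 * d + 2) := by positivity
    rw [← one_div, le_div_iff₀ (by linarith)]
    nlinarith
  have hb := one_add_mul_le_pow (a := 1 / (4 * (d : ℝ) + 2))
    (le_trans (by norm_num) (by positivity : (0 : ℝ) ≤ 1 / (4 * (d : ℝ) + 2))) (4 * (d + 1))
  have h2 : (2 : ℝ) ≤ (1 + 1 / (4 * (d : ℝ) + 2)) ^ (4 * (d + 1)) := by
    refine le_trans ?_ hb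
    push_cast
    rw [mul_one_div]
    have : (1 : ℝ) ≤ 4 * (d + 1) / (4 * d + 2) := by
      rw [le_div_iff₀ (by positivity)]; linarith
    linarith
  calc hold d d ^ (4 * (d + 1)) ≤ ((1 + 1 / (4 * d + 2 : ℝ))⁻¹) ^ (4 * (d + 1)) :=
        pow_le_pow_left₀ (hold_nonneg d d) hle _
    _ = ((1 + 1 / (4 * d + 2 : ℝ)) ^ (4 * (d + 1)))⁻¹ := inv_pow _ _
    _ ≤ 2⁻¹ := inv_anti₀ (by norm_num) h2
    _ = 1 / 2 := by norm_num

lemma pow_early (d : ℕ) (π : V → ℝ) (hP : RowStochastic (chain d π)) (v : V) (k : ℕ) :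
    ∀ i t, i + k = d → 5 * (d + 1) + k ≤ t → t ≤ 6 * (d + 1) →
      (1 / 128 : ℝ) ≤ (chain d π ^ t) (node d v i) none := by
  induction k with
  | zero =>
    intro i t h1 h2 h3
    obtain rfl : i = d := by omega
    obtain ⟨s, rfl⟩ := Nat.exists_eq_add_of_le (show i ≤ t by omega)
    have h4 := pow_middle i π hP v s h3
    have h5 := hold_pow_le i s (by omega)
    linarith
  | succ k ih =>
    intro i t h1 h2 h3
    obtain ⟨t, rfl⟩ : ∃ s, t = s + 1 := ⟨t - 1, by omega⟩
    rw [pow_step d π v i (by omega)]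
    have : hold d i = 0 := by
      simp only [hold]; rw [if_neg (by omega)]
    rw [this]
    have := ih (i + 1) t (by omega) (by omega) (by omega)
    linarith

lemma minorize (d : ℕ) (π : V → ℝ) (hP : RowStochastic (chain d π)) (x : States V d) :
    (1 / 128 : ℝ) ≤ (chain d π ^ (6 * (d + 1))) x none := by
  rcases x with _ | ⟨v, i⟩
  · exact le_trans (by norm_num) (pow_hub_ge d π hP _ le_rfl)
  · have hn : (some (v, i) : States V d) = node d v i := by
      rw [node, dif_pos i.2]
    rw [hn]
    by_cases h : d < i.val
    · exact le_trans (by norm_num)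
        (pow_late d π hP v (2 * d + 1 - i) i _ h (by omega) (by omega) le_rfl)
    · exact pow_early d π hP v (d - i) i _ (by omega) (by omega) le_rfl

/-! ### Conformance with the graph and size -/

/-- The projection to the base graph, along chosen walks `p v` from `r` to `v`: the state `(v, i)` is
`min (i + 1) (2d + 1 - i)` steps along the cycle from the hub, in one direction or the other.
`getVert` is constant beyond the end of a walk, which makes a short walk wait at `v`. -/
def proj {G : SimpleGraph V} {r : V} (d : ℕ) (p : ∀ v, G.Walk r v) : States V d → V
  | none => r
  | some (v, i) => (p v).getVert (min (i + 1) (2 * d + 1 - i))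

lemma getVert_step {G : SimpleGraph V} {u v : V} (p : G.Walk u v) (k : ℕ) :
    G.Adj (p.getVert k) (p.getVert (k + 1)) ∨ p.getVert k = p.getVert (k + 1) := by
  by_cases h : k < p.length
  · exact Or.inl (p.adj_getVert_succ h)
  · right
    rw [p.getVert_of_length_le (by omega), p.getVert_of_length_le (by omega)]

lemma proj_node {G : SimpleGraph V} {r : V} (d : ℕ) (p : ∀ v, G.Walk r v) (v : V) (i : ℕ) :
    proj d p (node d v i) = (p v).getVert (min (i + 1) (2 * d + 1 - i)) := by
  unfold node
  split_ifs with h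
  · rfl
  · have : 2 * d + 1 - i = 0 := by omega
    simp [proj, this]

/-- Besides loops, the walk uses only the arcs of the cycles. -/
lemma chain_arc (d : ℕ) (π : V → ℝ) {x y : States V d} (hxy : x ≠ y) (h : 0 < chain d π x y) :
    (∃ v, x = none ∧ y = node d v 0) ∨ ∃ v i, x = some (v, i) ∧ y = node d v (i + 1) := by
  rcases x with _ | ⟨v, i⟩
  · rcases y with _ | ⟨w, j⟩
    · exact absurd rfl hxy
    · left
      refine ⟨w, rfl, ?_⟩
      simp only [chain] at h
      split_ifs at h with h0
      · simp only [node]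
        rw [dif_pos (by omega)]
        simp [Fin.ext_iff, h0]
      · exact absurd h (lt_irrefl _)
  · right
    refine ⟨v, i, rfl, ?_⟩
    by_contra hne
    simp only [chain] at h
    rw [if_neg (Ne.symm hxy), if_neg hne] at h
    simp at h

lemma chain_conform {G : SimpleGraph V} {r : V} (d : ℕ) (π : V → ℝ) (p : ∀ v, G.Walk r v)
    (x y : States V d) (h : 0 < chain d π x y) :
    G.Adj (proj d p x) (proj d p y) ∨ proj d p x = proj d p y := by
  by_cases hxy : x = y
  · exact Or.inr (by rw [hxy])
  rcases chain_arc d π hxy h with ⟨v, rfl, rfl⟩ | ⟨v, i, rfl, rfl⟩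
  · rw [proj_node]
    have := getVert_step (p v) 0
    rw [(p v).getVert_zero] at this
    have e : min (0 + 1) (2 * d + 1 - 0) = 0 + 1 := by omega
    rw [e]
    exact this
  · rw [proj_node]
    simp only [proj]
    have hi := i.2
    by_cases hd : i.val < d
    · have e1 : min (i.val + 1) (2 * d + 1 - i) = i + 1 := by omega
      have e2 : min (i.val + 1 + 1) (2 * d + 1 - (i + 1)) = i + 1 + 1 := by omega
      rw [e1, e2]
      exact getVert_step _ _
    · have e1 : min (i.val + 1) (2 * d + 1 - i) = 2 * d - i + 1 := by omega
      have e2 : min (i.val + 1 + 1) (2 * d + 1 - (i + 1)) = 2 * d - i := by omega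
      rw [e1, e2]
      exact (getVert_step _ _).imp SimpleGraph.Adj.symm Eq.symm

lemma chain_size (d : ℕ) (π : V → ℝ) :
    {q : States V d × States V d | q.1 ≠ q.2 ∧ 0 < chain d π q.1 q.2}.ncard
      ≤ 2 * Fintype.card V * (d + 1) := by
  classical
  let A : Finset (States V d × States V d) := Finset.univ.image fun v : V => (none, node d v 0)
  let B : Finset (States V d × States V d) :=
    Finset.univ.image fun x : V × Fin (2 * d + 1) => (some x, node d x.1 (x.2 + 1))
  have hsub : {q : States V d × States V d | q.1 ≠ q.2 ∧ 0 < chain d π q.1 q.2} ⊆ ↑(A ∪ B) := by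
    rintro ⟨x, y⟩ ⟨hxy, h⟩
    rcases chain_arc d π hxy h with ⟨v, hx, hy⟩ | ⟨v, i, hx, hy⟩
    · exact Finset.mem_coe.2 (Finset.mem_union_left _
        (Finset.mem_image.2 ⟨v, Finset.mem_univ _, by simp only at hx hy; rw [hx, hy]⟩))
    · exact Finset.mem_coe.2 (Finset.mem_union_right _
        (Finset.mem_image.2 ⟨(v, i), Finset.mem_univ _, by simp only at hx hy; rw [hx, hy]⟩))
  calc _ ≤ (↑(A ∪ B) : Set (States V d × States V d)).ncard :=
        Set.ncard_le_ncard hsub (Finset.finite_toSet _)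
    _ = (A ∪ B).card := Set.ncard_coe_finset _
    _ ≤ A.card + B.card := Finset.card_union_le _ _
    _ ≤ Fintype.card V + Fintype.card (V × Fin (2 * d + 1)) :=
        add_le_add Finset.card_image_le Finset.card_image_le
    _ = 2 * Fintype.card V * (d + 1) := by
        rw [Fintype.card_prod, Fintype.card_fin]; ring

end Chain

end PseudoLift

open PseudoLift

/-- for every finite connected graph `G` with `n` vertices and diameter
`D ≥ 1` and every positive probability distribution `π` on `V`, there is a pseudo-lifted
random walk `Phat` on a set `V̂` of at most `2nD + 1` states, of size at most `|E| + 2nD`,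
which mixes (to within total-variation distance `1/4`) in time `O(D)`, with an absolute
constant independent of `G`, `n`, `D`, `π`. -/
theorem pseudo_lifting_exists :
    ∃ C : ℝ, 0 < C ∧
    ∀ (V : Type) [Fintype V] [DecidableEq V] (G : SimpleGraph V) [DecidableRel G.Adj]
      (D : ℕ) (π : V → ℝ),
      G.Connected → 1 ≤ D →
      (∀ u v : V, G.dist u v ≤ D) → (∃ u v : V, G.dist u v = D) →
      (∀ u, 0 < π u) → (∑ u, π u = 1) →
      ∃ (W : Type) (_ : Fintype W) (_ : DecidableEq W)
        (Phat : Matrix W W ℝ) (pihat : W → ℝ) (f : W → V) (T : Finset W),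
        -- the lifted state space has at most 2nD + 1 states
        Fintype.card W ≤ 2 * Fintype.card V * D + 1 ∧
        -- Phat is a random walk with positive stationary distribution pihat
        RowStochastic Phat ∧ (∀ wh, 0 < pihat wh) ∧ Stationary Phat pihat ∧
        -- (a) pseudo-lifting: graph conformance ...
        (∀ uh vh, 0 < Phat uh vh → G.Adj (f uh) (f vh) ∨ f uh = f vh) ∧
        -- ... and |T| = |V| with pihat(f⁻¹(u) ∩ T) = π(u)/2 for every u
        T.card = Fintype.card V ∧
        (∀ u : V, ∑ wh ∈ T.filter (fun wh => f wh = u), pihat wh = π u / 2) ∧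
        -- (b) size bound: at most |E| + 2nD off-diagonal positive entries
        {p : W × W | p.1 ≠ p.2 ∧ 0 < Phat p.1 p.2}.ncard
          ≤ G.edgeFinset.card + 2 * Fintype.card V * D ∧
        -- (c) mixing: total-variation distance at most 1/4 after C·D steps
        (∀ t : ℕ, C * (D : ℝ) ≤ (t : ℝ) → ∀ uh : W,
          (1 / 2) * ∑ vh, |(Phat ^ t) uh vh - pihat vh| ≤ 1 / 4) := by
  -- 256 blocks of `6D` steps: `(127/128) ^ 256 ≤ 1/4`
  refine ⟨6 * 256, by norm_num, ?_⟩
  intro V _ _ G _ D π hG hD hdist _ hπ h1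
  obtain ⟨d, rfl⟩ : ∃ d, D = d + 1 := ⟨D - 1, by omega⟩
  obtain ⟨r⟩ := hG.nonempty
  choose p hp using fun v => hG.exists_walk_length_eq_dist r v
  have hP := chain_stochastic d π hπ h1
  have hmid : ∀ v, proj d p (some (v, ⟨d, by omega⟩)) = v := by
    intro v
    simp only [proj]
    refine (p v).getVert_of_length_le ?_
    rw [hp v]
    have := hdist r v
    omega
  let mid : V ↪ States V d := ⟨fun v => some (v, ⟨d, by omega⟩), fun a b h => by simpa using h⟩
  refine ⟨States V d, inferInstance, inferInstance, chain d π, stat d π, proj d p,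
    Finset.univ.map mid, ?_, hP, stat_pos d π hπ, stat_stationary d π h1,
    chain_conform d π p, ?_, ?_, ?_, ?_⟩
  · rw [Fintype.card_option, Fintype.card_prod, Fintype.card_fin]
    have : Fintype.card V * (2 * d + 1) ≤ 2 * Fintype.card V * (d + 1) := by nlinarith
    omega
  · simp
  · intro u
    have hf : (Finset.univ.map mid).filter (fun w => proj d p w = u) = {mid u} := by
      ext w
      simp only [Finset.mem_filter, Finset.mem_map, Finset.mem_univ, true_and,
        Finset.mem_singleton]
      constructor
      · rintro ⟨⟨v, rfl⟩, h⟩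
        have : v = u := (hmid v).symm.trans h
        rw [this]
      · rintro rfl
        exact ⟨⟨u, rfl⟩, hmid u⟩
    rw [hf, Finset.sum_singleton]
    change π u / (8 * (d : ℝ) + 4) * (if d = d then 4 * (d : ℝ) + 2 else 1) = π u / 2
    rw [if_pos rfl]
    field_simp
    ring
  · exact (chain_size d π).trans (Nat.le_add_left _ _)
  · intro t ht x
    have ht' : 6 * (d + 1) * 256 ≤ t := by
      have : ((6 * (d + 1) * 256 : ℕ) : ℝ) ≤ t := by
        push_cast at ht ⊢
        linarith
      exact_mod_cast this
    refine (doeblin hP (stat_stationary d π h1) (stat_pos d π hπ) (stat_sum d π h1) none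
      (1 / 128) (by norm_num) (6 * (d + 1)) (minorize d π hP) 256 t ht' x).trans ?_
    norm_num
end

section
/- Let G = (V,E) be a finite connected graph with n vertices and diameter D ≥ 1, let π be a probability distribution on V with π_u > 0 for all u, let R be an integer with 1 ≤ R ≤ D, and let Y ⊆ V be a set such that every vertex of V is within graph distance R of some vertex of Y. Then there exist a finite set V̂, a row-stochastic matrix P̂ on V̂ with positive stationary distribution π̂, a map f : V̂ → V and a subset T ⊆ V̂ with |T| = |V|, such that: (a) P̂ is a pseudo-lifting of π on G with respect to f and T; (b) the number of pairs (û,v̂) with û ≠ v̂ and P̂_{ûv̂} > 0 is at most |E| + 2Rn + 2D|Y|; and (c) there is an absolute constant C > 0 such that for every t ≥ C·D and every û ∈ V̂, (1/2)·Σ_{v̂∈V̂} |P̂^t(û,v̂) − π̂(v̂)| ≤ 1/4. -/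
/-! ### Minorization and mixing -/

open Matrix in
lemma sum_abs_vecMul_le {W : Type*} [Fintype W] (A : Matrix W W ℝ) (c : ℝ)
    (hA : ∀ i j, 0 ≤ A i j) (hs : ∀ i, ∑ j, A i j = c) (ν : W → ℝ) :
    ∑ j, |(ν ᵥ* A) j| ≤ c * ∑ i, |ν i| := by
  calc ∑ j, |(ν ᵥ* A) j| ≤ ∑ j, ∑ i, |ν i| * A i j := by
        refine Finset.sum_le_sum fun j _ => ?_
        refine (Finset.abs_sum_le_sum_abs _ _).trans (le_of_eq ?_)
        refine Finset.sum_congr rfl fun i _ => ?_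
        rw [abs_mul, abs_of_nonneg (hA i j)]
    _ = c * ∑ i, |ν i| := by
        rw [Finset.sum_comm, Finset.mul_sum]
        refine Finset.sum_congr rfl fun i _ => ?_
        rw [← Finset.mul_sum, hs, mul_comm]

lemma RowStochastic.mul {W : Type*} [Fintype W] {P Q : Matrix W W ℝ}
    (hP : RowStochastic P) (hQ : RowStochastic Q) : RowStochastic (P * Q) := by
  refine ⟨fun i j => ?_, fun i => ?_⟩
  · rw [Matrix.mul_apply]
    exact Finset.sum_nonneg fun k _ => mul_nonneg (hP.1 _ _) (hQ.1 _ _)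
  · simp only [Matrix.mul_apply]
    rw [Finset.sum_comm]
    simp only [← Finset.mul_sum, hQ.2, mul_one, hP.2]

lemma RowStochastic.pow {W : Type*} [Fintype W] [DecidableEq W] {P : Matrix W W ℝ}
    (hP : RowStochastic P) (t : ℕ) : RowStochastic (P ^ t) := by
  induction t with
  | zero =>
    refine ⟨fun i j => ?_, fun i => ?_⟩
    · rw [pow_zero, Matrix.one_apply]; split_ifs <;> norm_num
    · simp [Matrix.one_apply]
  | succ t ih => rw [pow_succ]; exact ih.mul hP

open Matrix in
/-- A matrix whose rows all dominate `δ q` contracts the `ℓ¹` norm of mass-zero vectors by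
`1 - δ`. -/
lemma sum_abs_vecMul_le_of_minorized {W : Type*} [Fintype W] {A : Matrix W W ℝ}
    (hA : RowStochastic A) {q : W → ℝ} (hq : ∑ w, q w = 1) {δ : ℝ}
    (hmin : ∀ i j, δ * q j ≤ A i j) {ν : W → ℝ} (hν : ∑ w, ν w = 0) :
    ∑ j, |(ν ᵥ* A) j| ≤ (1 - δ) * ∑ i, |ν i| := by
  -- Subtracting the rank-one matrix with constant rows `δ q` changes nothing on `ν`.
  have key : ν ᵥ* A = ν ᵥ* (Matrix.of fun i j => A i j - δ * q j) := by
    ext j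
    simp only [Matrix.vecMul, dotProduct, Matrix.of_apply, mul_sub, Finset.sum_sub_distrib]
    rw [← Finset.sum_mul, hν]; ring
  rw [key]
  refine sum_abs_vecMul_le _ _ (fun i j => ?_) (fun i => ?_) ν
  · simpa using hmin i j
  · simp [Finset.sum_sub_distrib, hA.2, ← Finset.mul_sum, hq]

open Matrix in
/-- Doeblin's theorem: if some power `P ^ S` dominates `δ` times the stationary distribution in
every row, the distance to stationarity contracts by `1 - δ` every `S` steps. -/
lemma tv_le_of_minorized {W : Type*} [Fintype W] [DecidableEq W] {P : Matrix W W ℝ}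
    (hP : RowStochastic P) {q : W → ℝ} (hq0 : ∀ w, 0 ≤ q w) (hq : ∑ w, q w = 1)
    (hst : Stationary P q) {δ : ℝ} {S : ℕ} (hδ : δ ≤ 1)
    (hmin : ∀ i j, δ * q j ≤ (P ^ S) i j) {K t : ℕ} (ht : S * K ≤ t) (u : W) :
    (1 / 2) * ∑ v, |(P ^ t) u v - q v| ≤ (1 - δ) ^ K := by
  set ν : W → ℝ := fun w => (if u = w then 1 else 0) - q w with hν
  have hqP : ∀ s : ℕ, q ᵥ* (P ^ s) = q := by
    intro s
    induction s with
    | zero => simp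
    | succ s ih => rw [pow_succ, ← Matrix.vecMul_vecMul, ih]; ext j; exact hst j
  have hrow : ∀ s : ℕ, ∀ v, (P ^ s) u v - q v = (ν ᵥ* (P ^ s)) v := by
    intro s v
    have h := congrFun (hqP s) v
    simp only [Matrix.vecMul, dotProduct] at h ⊢
    simp only [hν, sub_mul, Finset.sum_sub_distrib, h]
    simp
  have hbase : ∑ w, |ν w| ≤ 2 := by
    calc ∑ w, |ν w| ≤ ∑ w, ((if u = w then 1 else 0) + q w) := by
          refine Finset.sum_le_sum fun w _ => ?_
          refine (abs_sub _ _).trans (le_of_eq ?_)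
          rw [abs_of_nonneg (hq0 w), abs_of_nonneg (by split_ifs <;> norm_num)]
      _ = 2 := by rw [Finset.sum_add_distrib, hq]; simp; norm_num
  have hzero : ∀ s : ℕ, ∑ v, (ν ᵥ* (P ^ s)) v = 0 := by
    intro s
    simp only [← hrow, Finset.sum_sub_distrib, hq, (hP.pow s).2, sub_self]
  have hK : ∀ K : ℕ, ∑ v, |(ν ᵥ* (P ^ (S * K))) v| ≤ (1 - δ) ^ K * 2 := by
    intro K
    induction K with
    | zero => simpa using hbase
    | succ K ih =>
      rw [Nat.mul_succ, pow_add, ← Matrix.vecMul_vecMul]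
      refine (sum_abs_vecMul_le_of_minorized (hP.pow S) hq hmin (hzero _)).trans ?_
      rw [pow_succ]
      nlinarith [mul_le_mul_of_nonneg_left ih (sub_nonneg.2 hδ)]
  obtain ⟨d, rfl⟩ := Nat.exists_eq_add_of_le ht
  simp only [hrow]
  rw [pow_add, ← Matrix.vecMul_vecMul]
  have := sum_abs_vecMul_le _ 1 (hP.pow d).1 (hP.pow d).2 (ν ᵥ* (P ^ (S * K)))
  linarith [hK K]

/-! ### Walks on a layered cycle -/

/-- Combinatorial data of a layered cycle: a random `u : V` with law `π` is seen at layer `k`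
through the map `S k`, the layers `0, …, N` close up (`S N = S 0`), and at layer `r` nothing about
`u` is remembered. The state space `W` is the disjoint union of the ranges of
`S 0, …, S (N - 1)`, and `lv` is the layer of a state. -/
structure LayeredCycle (V W : Type) [Fintype V] where
  π : V → ℝ
  N : ℕ
  r : ℕ
  S : ℕ → V → W
  lv : W → ℕ
  π_pos : ∀ u, 0 < π u
  π_sum : ∑ u, π u = 1
  N_ge : 4 ≤ N
  r_pos : 0 < r
  r_lt : r < N
  S_N : S N = S 0
  lv_lt : ∀ w, lv w < N
  lv_S : ∀ k, k < N → ∀ u, lv (S k u) = k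
  surj : ∀ w, ∃ u, S (lv w) u = w
  S_r : ∀ u u', S r u = S r u'

namespace LayeredCycle

set_option linter.unusedSectionVars false

variable {V W : Type} [Fintype V] [Fintype W] [DecidableEq W] (L : LayeredCycle V W)

/-- The law of `S k u` for `u` distributed according to `π`. -/
noncomputable def M (k : ℕ) (w : W) : ℝ := ∑ u, if L.S k u = w then L.π u else 0

/-- The layer-advancing walk: the law of the view of `u` at the next layer, conditioned on the
view at the current one. -/
noncomputable def Q : Matrix W W ℝ := fun w w' =>
  (∑ u, if L.S (L.lv w) u = w ∧ L.S (L.lv w + 1) u = w' then L.π u else 0) / L.M (L.lv w) w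

/-- The probability of leaving layer `0`. -/
noncomputable def p : ℝ := 1 / ((L.N : ℝ) - 1)

/-- The walk that advances by `Q`, except that at layer `0` it only does so with probability `p`
and stays put otherwise. -/
noncomputable def P : Matrix W W ℝ := fun w w' =>
  if L.lv w = 0 then (1 - L.p) * (if w = w' then 1 else 0) + L.p * L.Q w w' else L.Q w w'

/-- The stationary distribution of `P`: half of the mass is on layer `0`, the rest is shared
equally by the other layers. -/
noncomputable def pihat (w : W) : ℝ :=
  if L.lv w = 0 then L.M (L.lv w) w / 2 else L.p / 2 * L.M (L.lv w) w

/-- `ν` is a probability vector carried by layer `k`. -/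
def IsLevel (k : ℕ) (ν : W → ℝ) : Prop :=
  (∀ w, 0 ≤ ν w) ∧ ∑ w, ν w = 1 ∧ ∀ w, (∀ u, L.S k u ≠ w) → ν w = 0

lemma N_cast : (4 : ℝ) ≤ L.N := by exact_mod_cast L.N_ge

lemma p_pos : 0 < L.p := by
  have := L.N_cast
  unfold p; apply one_div_pos.2; linarith

lemma p_mul : L.p * ((L.N : ℝ) - 1) = 1 := by
  have := L.N_cast
  unfold p; rw [one_div_mul_cancel]; linarith

lemma p_le : L.p ≤ 1 / 3 := by
  have := L.N_cast
  have := L.p_mul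
  have := L.p_pos
  nlinarith

lemma M_nonneg (k : ℕ) (w : W) : 0 ≤ L.M k w :=
  Finset.sum_nonneg fun u _ => by split_ifs; exacts [(L.π_pos u).le, le_rfl]

lemma M_pos {k : ℕ} {w : W} (h : ∃ u, L.S k u = w) : 0 < L.M k w := by
  obtain ⟨u, rfl⟩ := h
  refine Finset.sum_pos' (fun u _ => ?_) ⟨u, Finset.mem_univ _, ?_⟩
  · split_ifs; exacts [(L.π_pos u).le, le_rfl]
  · simpa using L.π_pos u

lemma M_lv_pos (w : W) : 0 < L.M (L.lv w) w := L.M_pos (L.surj w)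

lemma M_sum (k : ℕ) : ∑ w, L.M k w = 1 := by
  unfold M
  rw [Finset.sum_comm]
  simp [L.π_sum]

lemma M_N : L.M L.N = L.M 0 := by unfold M; rw [L.S_N]

lemma M_isLevel (k : ℕ) : L.IsLevel k (L.M k) :=
  ⟨L.M_nonneg k, L.M_sum k, fun _ hw => Finset.sum_eq_zero fun u _ => if_neg (hw u)⟩

lemma M_eq_zero {k : ℕ} (hk : k < L.N) {w : W} (h : L.lv w ≠ k) : L.M k w = 0 :=
  (L.M_isLevel k).2.2 w fun u hu => h (by rw [← hu, L.lv_S k hk])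

lemma IsLevel.eq_zero {L : LayeredCycle V W} {k : ℕ} {ν : W → ℝ} (hν : L.IsLevel k ν)
    (hk : k < L.N) {w : W} (h : L.lv w ≠ k) : ν w = 0 :=
  hν.2.2 w fun u hu => h (by rw [← hu, L.lv_S k hk])

lemma Q_nonneg (w w' : W) : 0 ≤ L.Q w w' :=
  div_nonneg (Finset.sum_nonneg fun u _ => by split_ifs; exacts [(L.π_pos u).le, le_rfl])
    (L.M_nonneg _ _)

lemma Q_rowStochastic : RowStochastic L.Q := by
  refine ⟨L.Q_nonneg, fun w => ?_⟩
  unfold Q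
  rw [← Finset.sum_div, div_eq_one_iff_eq (L.M_lv_pos w).ne', Finset.sum_comm]
  unfold M
  refine Finset.sum_congr rfl fun u _ => ?_
  by_cases h : L.S (L.lv w) u = w <;> simp [h]

lemma exists_of_Q_pos {w w' : W} (h : 0 < L.Q w w') :
    ∃ u, L.S (L.lv w) u = w ∧ L.S (L.lv w + 1) u = w' := by
  by_contra! hcon
  refine h.ne' ?_
  unfold Q
  rw [Finset.sum_eq_zero, zero_div]
  intro u _
  exact if_neg fun hu => hcon u hu.1 hu.2

open Matrix

lemma M_vecMul_Q {k : ℕ} (hk : k < L.N) : L.M k ᵥ* L.Q = L.M (k + 1) := by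
  ext w'
  have h1 : ∀ w, L.M k w * L.Q w w' =
      ∑ u, if L.S k u = w then (if L.S (k + 1) u = w' then L.π u else 0) else 0 := by
    intro w
    by_cases hw : L.lv w = k
    · unfold Q
      rw [hw, mul_div_cancel₀ _ (hw ▸ L.M_lv_pos w).ne']
      refine Finset.sum_congr rfl fun u _ => ?_
      rw [ite_and]
    · rw [L.M_eq_zero hk hw, zero_mul, Finset.sum_eq_zero]
      intro u _
      rw [if_neg]
      rintro rfl
      exact hw (L.lv_S k hk u)
  simp only [Matrix.vecMul, dotProduct, h1]
  rw [Finset.sum_comm]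
  unfold M
  simp

lemma IsLevel.vecMul_Q {L : LayeredCycle V W} {k : ℕ} {ν : W → ℝ} (hν : L.IsLevel k ν)
    (hk : k < L.N) : L.IsLevel (k + 1) (ν ᵥ* L.Q) := by
  refine ⟨fun w => Finset.sum_nonneg fun i _ => mul_nonneg (hν.1 i) (L.Q_nonneg _ _), ?_, ?_⟩
  · simp only [Matrix.vecMul, dotProduct]
    rw [Finset.sum_comm]
    simp only [← Finset.mul_sum, L.Q_rowStochastic.2, mul_one, hν.2.1]
  · intro w' hw'
    refine Finset.sum_eq_zero fun w _ => ?_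
    change ν w * L.Q w w' = 0
    by_cases hw : L.lv w = k
    · have : L.Q w w' = 0 := by
        by_contra hne
        obtain ⟨u, -, hu⟩ := L.exists_of_Q_pos ((L.Q_nonneg w w').lt_of_ne' hne)
        exact hw' u (hw ▸ hu)
      rw [this, mul_zero]
    · rw [hν.eq_zero hk hw, zero_mul]

lemma IsLevel.vecMul_P {L : LayeredCycle V W} {k : ℕ} {ν : W → ℝ} (hν : L.IsLevel k ν)
    (hk0 : 0 < k) (hk : k < L.N) : ν ᵥ* L.P = ν ᵥ* L.Q := by
  ext w'
  refine Finset.sum_congr rfl fun w _ => ?_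
  change ν w * L.P w w' = ν w * L.Q w w'
  by_cases hw : L.lv w = k
  · rw [P, if_neg (by omega)]
  · rw [hν.eq_zero hk hw, zero_mul, zero_mul]

lemma IsLevel.vecMul_P_zero {L : LayeredCycle V W} {ν : W → ℝ} (hν : L.IsLevel 0 ν) :
    ν ᵥ* L.P = (1 - L.p) • ν + L.p • (ν ᵥ* L.Q) := by
  have hN := L.N_ge
  ext w'
  have h1 : ∀ w, ν w * L.P w w' =
      (1 - L.p) * (if w = w' then ν w else 0) + L.p * (ν w * L.Q w w') := by
    intro w
    by_cases hw : L.lv w = 0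
    · rw [P, if_pos hw]; split_ifs <;> ring
    · rw [hν.eq_zero (by omega) hw]; simp
  simp only [Matrix.vecMul, dotProduct, h1, Finset.sum_add_distrib, ← Finset.mul_sum,
    Pi.add_apply, Pi.smul_apply, smul_eq_mul]
  simp

lemma P_rowStochastic : RowStochastic L.P := by
  have h0 := L.p_pos
  have h1 := L.p_le
  refine ⟨fun w w' => ?_, fun w => ?_⟩
  · unfold P
    have := L.Q_nonneg w w'
    split_ifs
    · simp only [mul_one]; nlinarith [mul_nonneg h0.le this]
    · simp only [mul_zero]; nlinarith [mul_nonneg h0.le this]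
    · exact this
  · unfold P
    split_ifs with h
    · rw [Finset.sum_add_distrib, ← Finset.mul_sum, ← Finset.mul_sum, L.Q_rowStochastic.2]
      simp
    · exact L.Q_rowStochastic.2 w

lemma pihat_pos (w : W) : 0 < L.pihat w := by
  have h0 := L.p_pos
  have := L.M_lv_pos w
  unfold pihat
  split_ifs <;> positivity

lemma pihat_eq : L.pihat =
    (1 / 2 : ℝ) • L.M 0 + (L.p / 2) • ∑ k ∈ Finset.Ico 1 L.N, L.M k := by
  have hN := L.N_ge
  ext w
  simp only [Pi.add_apply, Pi.smul_apply, smul_eq_mul, Finset.sum_apply]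
  unfold pihat
  split_ifs with h
  · rw [Finset.sum_eq_zero, h]
    · ring
    · intro k hk
      rw [Finset.mem_Ico] at hk
      exact L.M_eq_zero hk.2 (by omega)
  · rw [Finset.sum_eq_single (L.lv w), L.M_eq_zero (by omega) h]
    · ring
    · intro k hk hne
      rw [Finset.mem_Ico] at hk
      exact L.M_eq_zero hk.2 hne.symm
    · intro hk
      exact absurd (Finset.mem_Ico.2 ⟨by omega, L.lv_lt w⟩) hk

lemma pihat_sum : ∑ w, L.pihat w = 1 := by
  have hN := L.N_ge
  rw [L.pihat_eq]
  simp only [Pi.add_apply, Pi.smul_apply, smul_eq_mul, Finset.sum_apply, Finset.sum_add_distrib,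
    ← Finset.mul_sum, L.M_sum]
  rw [Finset.sum_comm]
  simp only [L.M_sum, Finset.sum_const, Nat.card_Ico, nsmul_eq_mul, mul_one]
  rw [Nat.cast_sub (by omega)]
  have := L.p_mul
  push_cast
  linarith

lemma stationary : Stationary L.P L.pihat := by
  have hN := L.N_ge
  have key : L.pihat ᵥ* L.P = L.pihat := by
    have hsum : (∑ k ∈ Finset.Ico 1 L.N, L.M k) ᵥ* L.P = ∑ k ∈ Finset.Ico 1 L.N, L.M (k + 1) := by
      rw [Matrix.sum_vecMul]
      refine Finset.sum_congr rfl fun k hk => ?_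
      rw [Finset.mem_Ico] at hk
      rw [(L.M_isLevel k).vecMul_P (by omega) hk.2, L.M_vecMul_Q hk.2]
    -- Shifting the layers by one replaces `M 1` by `M N = M 0`.
    have htel : (∑ k ∈ Finset.Ico 1 L.N, L.M (k + 1)) + L.M 1
        = (∑ k ∈ Finset.Ico 1 L.N, L.M k) + L.M 0 := by
      rw [Finset.sum_Ico_add' (fun k => L.M k) 1 L.N 1, ← L.M_N,
        ← Finset.sum_Ico_succ_top (by omega : 1 ≤ L.N), add_comm,
        Finset.sum_eq_sum_Ico_succ_bot (by omega : 1 < L.N + 1)]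
    rw [L.pihat_eq, Matrix.add_vecMul, Matrix.smul_vecMul, Matrix.smul_vecMul, hsum,
      (L.M_isLevel 0).vecMul_P_zero, L.M_vecMul_Q (by omega)]
    rw [← eq_sub_iff_add_eq] at htel
    rw [htel]
    module
  intro j
  exact congrFun key j

/-- At layer `r` there is a single state. -/
lemma IsLevel.eq_M_r {L : LayeredCycle V W} {ν : W → ℝ} (hν : L.IsLevel L.r ν) :
    ν = L.M L.r := by
  obtain ⟨u0⟩ : Nonempty V := by
    by_contra h
    rw [not_nonempty_iff] at h
    simpa using L.π_sum
  have aux : ∀ μ : W → ℝ, L.IsLevel L.r μ → ∀ w, μ w = if w = L.S L.r u0 then 1 else 0 := by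
    intro μ hμ
    have hz : ∀ w, w ≠ L.S L.r u0 → μ w = 0 := fun w hw =>
      hμ.2.2 w fun u hu => hw (by rw [← hu, L.S_r u u0])
    intro w
    split_ifs with h
    · rw [← hμ.2.1, h, Finset.sum_eq_single (L.S L.r u0)]
      · exact fun w _ hw => hz w hw
      · simp
    · exact hz w h
  ext w
  rw [aux ν hν, aux _ (L.M_isLevel _)]

lemma IsLevel.vecMul_pow {L : LayeredCycle V W} {k : ℕ} {ν : W → ℝ} (hν : L.IsLevel k ν)
    (hk0 : 0 < k) (j : ℕ) (hj : k + j ≤ L.N) : L.IsLevel (k + j) (ν ᵥ* L.P ^ j) := by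
  induction j with
  | zero => simpa using hν
  | succ j ih =>
    have h := ih (by omega)
    rw [pow_succ, ← Matrix.vecMul_vecMul, h.vecMul_P (by omega) (by omega)]
    exact h.vecMul_Q (by omega)

lemma M_vecMul_pow {k : ℕ} (hk0 : 0 < k) (j : ℕ) (hj : k + j ≤ L.N) :
    L.M k ᵥ* L.P ^ j = L.M (k + j) := by
  induction j with
  | zero => simp
  | succ j ih =>
    rw [pow_succ, ← Matrix.vecMul_vecMul, ih (by omega),
      (L.M_isLevel _).vecMul_P (by omega) (by omega), L.M_vecMul_Q (by omega), add_assoc]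

/-- A full trip from layer `1` passes the one-state layer `r`, so it arrives at layer `0` with
exactly the law `M 0`. -/
lemma IsLevel.one_vecMul_pow {L : LayeredCycle V W} {ν : W → ℝ} (hν : L.IsLevel 1 ν) :
    ν ᵥ* L.P ^ (L.N - 1) = L.M 0 := by
  have h0 := L.r_pos
  have h1 := L.r_lt
  have h := hν.vecMul_pow one_pos (L.r - 1) (by omega)
  rw [show 1 + (L.r - 1) = L.r by omega] at h
  rw [show L.N - 1 = (L.r - 1) + (L.N - L.r) by omega, pow_add, ← Matrix.vecMul_vecMul, h.eq_M_r,
    L.M_vecMul_pow h0 _ (by omega), show L.r + (L.N - L.r) = L.N by omega, L.M_N]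

lemma vecMul_mono {A : Matrix W W ℝ} (hA : ∀ i j, 0 ≤ A i j) {μ ν : W → ℝ} (h : μ ≤ ν) :
    μ ᵥ* A ≤ ν ᵥ* A := fun j =>
  Finset.sum_le_sum fun i _ => mul_le_mul_of_nonneg_right (h i) (hA i j)

/-- From the law `M 0` the walk may simply stay put for `j` steps. -/
lemma M_zero_stay (j : ℕ) : (1 - L.p) ^ j • L.M 0 ≤ L.M 0 ᵥ* L.P ^ j := by
  have h0 := L.p_pos
  have h1 := L.p_le
  induction j with
  | zero => simp
  | succ j ih =>
    have := vecMul_mono L.P_rowStochastic.1 ih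
    rw [Matrix.vecMul_vecMul, ← pow_succ, Matrix.smul_vecMul, (L.M_isLevel 0).vecMul_P_zero,
      L.M_vecMul_Q (by have := L.N_ge; omega)] at this
    refine le_trans ?_ this
    intro w
    have hM := L.M_nonneg 1 w
    have : 0 ≤ (1 - L.p) ^ j * (L.p * L.M (0 + 1) w) :=
      mul_nonneg (pow_nonneg (by linarith) _) (mul_nonneg h0.le hM)
    simp only [Pi.smul_apply, Pi.add_apply, smul_eq_mul, pow_succ]
    nlinarith

/-- Starting in layer `0`, the walk is back in layer `0` with law `M 0` after `N + j` steps if it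
leaves at one of the times `0, …, j` and does not leave again: these `j + 1` events have probability
`p (1 - p) ^ j` each. -/
lemma IsLevel.zero_return {L : LayeredCycle V W} {ν : W → ℝ} (hν : L.IsLevel 0 ν) (j : ℕ) :
    (((j : ℝ) + 1) * L.p * (1 - L.p) ^ j) • L.M 0 ≤ ν ᵥ* L.P ^ (L.N + j) := by
  have h0 := L.p_pos
  have h1 := L.p_le
  have hN := L.N_ge
  have hνQ := hν.vecMul_Q (by omega)
  have hstep : ∀ t, ν ᵥ* L.P ^ (t + 1)
      = (1 - L.p) • (ν ᵥ* L.P ^ t) + L.p • ((ν ᵥ* L.Q) ᵥ* L.P ^ t) := by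
    intro t
    rw [pow_succ', ← Matrix.vecMul_vecMul, hν.vecMul_P_zero, Matrix.add_vecMul,
      Matrix.smul_vecMul, Matrix.smul_vecMul]
  have hloop : ∀ i, (ν ᵥ* L.Q) ᵥ* L.P ^ (L.N - 1 + i) = L.M 0 ᵥ* L.P ^ i := by
    intro i
    rw [pow_add, ← Matrix.vecMul_vecMul, hνQ.one_vecMul_pow]
  induction j with
  | zero =>
    rw [show L.N + 0 = (L.N - 1) + 1 by omega, hstep, hνQ.one_vecMul_pow]
    intro w
    have : 0 ≤ (ν ᵥ* L.P ^ (L.N - 1)) w :=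
      Finset.sum_nonneg fun i _ => mul_nonneg (hν.1 i) ((L.P_rowStochastic.pow _).1 _ _)
    simp only [Pi.smul_apply, Pi.add_apply, smul_eq_mul, pow_zero]
    push_cast
    nlinarith
  | succ j ih =>
    rw [show L.N + (j + 1) = (L.N + j) + 1 by omega, hstep,
      show L.N + j = L.N - 1 + (j + 1) by omega, hloop,
      show L.N - 1 + (j + 1) = L.N + j by omega]
    intro w
    have e1 := ih w
    have e2 := L.M_zero_stay (j + 1) w
    simp only [Pi.smul_apply, Pi.add_apply, smul_eq_mul] at e1 e2 ⊢
    have e3 := mul_le_mul_of_nonneg_left e1 (by linarith : 0 ≤ 1 - L.p)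
    have e4 := mul_le_mul_of_nonneg_left e2 h0.le
    refine le_trans (le_of_eq ?_) (add_le_add e3 e4)
    push_cast
    ring

/-- A constant lower bound for the chance of staying at layer `0` for `4 N` steps: since
`p ≤ 1 / 2`, `1 - p ≥ exp (-2 p)`, and `p = 1 / (N - 1)` gives `p N ≤ 2`. -/
lemma exp_le_stay : Real.exp (-16) ≤ (1 - L.p) ^ (4 * L.N) := by
  have h0 := L.p_pos
  have h1 := L.p_le
  have hN := L.N_cast
  have h2 := L.p_mul
  have h3 : Real.exp (-(2 * L.p)) ≤ 1 - L.p := by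
    rw [Real.exp_neg]
    refine inv_le_of_inv_le₀ (by linarith) ?_
    refine le_trans ?_ (Real.add_one_le_exp _)
    rw [inv_le_iff_one_le_mul₀ (by linarith)]
    nlinarith
  refine le_trans ?_ (pow_le_pow_left₀ (Real.exp_pos _).le h3 _)
  rw [← Real.exp_nat_mul]
  refine Real.exp_le_exp.2 ?_
  push_cast
  nlinarith

/-- After `5 N` steps every state is reached with probability at least a constant times its
stationary probability, wherever the walk starts. -/
lemma minorized (w w' : W) : Real.exp (-16) * L.pihat w' ≤ (L.P ^ (5 * L.N)) w w' := by
  have h0 := L.p_pos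
  have h1 := L.p_le
  have hN := L.N_cast
  have hN' := L.N_ge
  have h2 := L.p_mul
  have hlt := L.lv_lt w
  have hlt' := L.lv_lt w'
  set ν : W → ℝ := Pi.single w 1 with hν
  have hrow : ∀ t, (L.P ^ t) w w' = (ν ᵥ* L.P ^ t) w' := by
    intro t; rw [hν, Matrix.single_one_vecMul]; rfl
  have hνlev : L.IsLevel (L.lv w) ν := by
    refine ⟨fun v => ?_, by simp [hν], fun v hv => ?_⟩
    · rw [hν, Pi.single_apply]; split_ifs <;> norm_num
    · rw [hν, Pi.single_apply, if_neg]
      rintro rfl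
      obtain ⟨u, hu⟩ := L.surj v
      exact hv u hu
  -- The deterministic travel time `e` from `w` to layer `0`.
  obtain ⟨e, he, hlev⟩ : ∃ e ≤ L.N, L.IsLevel 0 (ν ᵥ* L.P ^ e) := by
    by_cases h : L.lv w = 0
    · exact ⟨0, by omega, by simpa [h] using hνlev⟩
    · refine ⟨L.N - L.lv w, by omega, ?_⟩
      have := hνlev.vecMul_pow (by omega) (L.N - L.lv w) (by omega)
      rw [show L.lv w + (L.N - L.lv w) = L.N by omega] at this
      simpa only [IsLevel, L.S_N] using this
  set j := 4 * L.N - e - L.lv w' with hj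
  have hret := hlev.zero_return j
  rw [Matrix.vecMul_vecMul, ← pow_add] at hret
  have hb : Real.exp (-16) ≤ ((j : ℝ) + 1) * L.p * (1 - L.p) ^ j := by
    have hjN : L.N ≤ j := by omega
    have hjN' : (L.N : ℝ) ≤ j := by exact_mod_cast hjN
    have e1 : (1 - L.p) ^ (4 * L.N) ≤ (1 - L.p) ^ j :=
      pow_le_pow_of_le_one (by linarith) (by linarith) (by omega)
    have e2 : 1 ≤ ((j : ℝ) + 1) * L.p := by nlinarith
    have e3 : 0 ≤ (1 - L.p) ^ j := pow_nonneg (by linarith) _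
    nlinarith [L.exp_le_stay]
  have hexp := Real.exp_pos (-16)
  set b := ((j : ℝ) + 1) * L.p * (1 - L.p) ^ j
  -- From the law `M 0`, layer `lv w'` is reached without delay with probability at least `p`.
  have hfin : L.pihat w' ≤ (L.M 0 ᵥ* L.P ^ (L.lv w')) w' := by
    unfold pihat
    split_ifs with h
    · rw [h]; simp only [pow_zero, Matrix.vecMul_one]; linarith [L.M_nonneg 0 w']
    · obtain ⟨i, hi⟩ : ∃ i, L.lv w' = 1 + i := ⟨L.lv w' - 1, by omega⟩
      have hM := L.M_nonneg (1 + i) w'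
      have hpos : 0 ≤ (L.M 0 ᵥ* L.P ^ i) w' :=
        Finset.sum_nonneg fun v _ =>
          mul_nonneg (L.M_nonneg 0 v) ((L.P_rowStochastic.pow _).1 _ _)
      rw [hi, pow_add, pow_one, ← Matrix.vecMul_vecMul, (L.M_isLevel 0).vecMul_P_zero,
        L.M_vecMul_Q (by omega), Matrix.add_vecMul, Matrix.smul_vecMul, Matrix.smul_vecMul,
        zero_add, L.M_vecMul_pow one_pos i (by omega)]
      simp only [Pi.smul_apply, Pi.add_apply, smul_eq_mul]
      nlinarith [mul_nonneg h0.le hM]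
  have hmono := vecMul_mono (L.P_rowStochastic.pow (L.lv w')).1 hret w'
  rw [Matrix.vecMul_vecMul, ← pow_add, Matrix.smul_vecMul,
    show e + (L.N + j) + L.lv w' = 5 * L.N by omega] at hmono
  simp only [Pi.smul_apply, smul_eq_mul] at hmono
  rw [hrow]
  refine le_trans ?_ hmono
  exact mul_le_mul hb hfin (L.pihat_pos w').le (hexp.le.trans hb)

lemma exists_of_P_pos {w w' : W} (hne : w ≠ w') (h : 0 < L.P w w') :
    ∃ u, L.S (L.lv w) u = w ∧ L.S (L.lv w + 1) u = w' := by
  have h0 := L.p_pos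
  unfold P at h
  rw [if_neg hne, mul_zero, zero_add] at h
  split_ifs at h
  · exact L.exists_of_Q_pos (pos_of_mul_pos_right h h0.le)
  · exact L.exists_of_Q_pos h

/-- The off-diagonal transitions join consecutive views `S k u`, `S (k + 1) u` of one `u`. -/
lemma ncard_edges_le : {p : W × W | p.1 ≠ p.2 ∧ 0 < L.P p.1 p.2}.ncard
    ≤ ∑ k ∈ Finset.range L.N, (Finset.univ.image fun u => (L.S k u, L.S (k + 1) u)).card := by
  refine le_trans ?_ Finset.card_biUnion_le
  rw [← Set.ncard_coe_finset]
  refine Set.ncard_le_ncard ?_ (Finset.finite_toSet _)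
  rintro ⟨w, w'⟩ ⟨hne, hpos⟩
  obtain ⟨u, hu, hu'⟩ := L.exists_of_P_pos hne hpos
  simp only [Finset.coe_biUnion, Set.mem_iUnion, Finset.mem_coe, Finset.mem_image,
    Finset.mem_range, Finset.mem_univ, true_and]
  exact ⟨L.lv w, L.lv_lt w, u, by rw [hu, hu']⟩

end LayeredCycle

/-! ### The hierarchical walk on a graph -/

/-- A lazy path of length exactly `n` between two vertices at distance at most `n`. -/
lemma exists_lazy_path {V : Type} {G : SimpleGraph V} (hG : G.Connected) {a b : V} {n : ℕ}
    (h : G.dist a b ≤ n) :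
    ∃ q : ℕ → V, q 0 = a ∧ q n = b ∧ ∀ i, G.Adj (q i) (q (i + 1)) ∨ q i = q (i + 1) := by
  obtain ⟨p, hp⟩ := hG.exists_walk_length_eq_dist a b
  refine ⟨p.getVert, p.getVert_zero, p.getVert_of_length_le (by omega), fun i => ?_⟩
  by_cases hi : i < p.length
  · exact Or.inl (p.adj_getVert_succ hi)
  · right
    rw [p.getVert_of_length_le (by omega), p.getVert_of_length_le (by omega)]

/-- A map that only depends on `y u ∈ Y` takes at most `|Y|` values. -/
lemma card_image_le_of_factors {V X Z : Type} [Fintype V] [DecidableEq X] [DecidableEq Z]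
    {y : V → Z} {Y : Finset Z} (hy : ∀ u, y u ∈ Y) {e : V → X}
    (h : ∀ u u', y u = y u' → e u = e u') : (Finset.univ.image e).card ≤ Y.card := by
  refine le_trans ?_ (Finset.card_le_card (Finset.image_subset_iff.2 fun u _ => hy u :
    Finset.univ.image y ⊆ Y))
  rcases isEmpty_or_nonempty V with hV | ⟨⟨u0⟩⟩
  · simp
  have hfac : e = Function.extend y e (fun _ => e u0) ∘ y := by
    funext u
    have hft : Function.FactorsThrough e y := fun u u' huu' => h u u' huu'
    exact (hft.extend_apply _ u).symm
  rw [hfac, ← Finset.image_image]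
  exact Finset.card_image_le

/-- hierarchical pseudo-lifting. Given a connected graph `G` with `n`
vertices and diameter `D ≥ 1`, a positive probability distribution `π`, `1 ≤ R ≤ D`,
and a set `Y` such that every vertex is within distance `R` of some vertex of `Y`,
there is a pseudo-lifted random walk of size at most `|E| + 2Rn + 2D|Y|` which mixes
(to within total-variation distance `1/4`) in time `O(D)`, with an absolute constant. -/
theorem hierarchical_pseudo_lifting_exists :
    ∃ C : ℝ, 0 < C ∧
    ∀ (V : Type) [Fintype V] [DecidableEq V] (G : SimpleGraph V) [DecidableRel G.Adj]
      (D R : ℕ) (π : V → ℝ) (Y : Finset V),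
      G.Connected → 1 ≤ D →
      (∀ u v : V, G.dist u v ≤ D) → (∃ u v : V, G.dist u v = D) →
      (∀ u, 0 < π u) → (∑ u, π u = 1) →
      1 ≤ R → R ≤ D →
      (∀ v : V, ∃ y ∈ Y, G.dist v y ≤ R) →
      ∃ (W : Type) (_ : Fintype W) (_ : DecidableEq W)
        (Phat : Matrix W W ℝ) (pihat : W → ℝ) (f : W → V) (T : Finset W),
        -- Phat is a random walk with positive stationary distribution pihat
        RowStochastic Phat ∧ (∀ wh, 0 < pihat wh) ∧ Stationary Phat pihat ∧
        -- (a) pseudo-lifting: graph conformance ...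
        (∀ uh vh, 0 < Phat uh vh → G.Adj (f uh) (f vh) ∨ f uh = f vh) ∧
        -- ... and |T| = |V| with pihat(f⁻¹(u) ∩ T) = π(u)/2 for every u
        T.card = Fintype.card V ∧
        (∀ u : V, ∑ wh ∈ T.filter (fun wh => f wh = u), pihat wh = π u / 2) ∧
        -- (b) size bound: at most |E| + 2Rn + 2D|Y| off-diagonal positive entries
        {p : W × W | p.1 ≠ p.2 ∧ 0 < Phat p.1 p.2}.ncard
          ≤ G.edgeFinset.card + 2 * R * Fintype.card V + 2 * D * Y.card ∧
        -- (c) mixing: total-variation distance at most 1/4 after C·D steps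
        (∀ t : ℕ, C * (D : ℝ) ≤ (t : ℝ) → ∀ uh : W,
          (1 / 2) * ∑ vh, |(Phat ^ t) uh vh - pihat vh| ≤ 1 / 4) := by
  obtain ⟨K, hK⟩ : ∃ K : ℕ, (1 - Real.exp (-16)) ^ K < 1 / 4 :=
    exists_pow_lt_of_lt_one (by norm_num) (by linarith [Real.exp_pos (-16)])
  refine ⟨20 * K + 1, by positivity, ?_⟩
  intro V _ _ G _ D R π Y hG hD hdist _ hπ hπ1 hR hRD hY
  classical
  choose y hyY hyd using hY
  obtain ⟨v0⟩ := hG.nonempty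
  choose q hq0 hqR hq using fun u => exists_lazy_path hG (hyd u)
  choose q' hq'0 hq'D hq' using fun x => exists_lazy_path hG (hdist x v0)
  set N := R + D + D + R with hN
  -- Layers `k` and `N - k` are copies of each other; `dep` is the common distance to layer `0`.
  set dep : ℕ → ℕ := fun k => min k (N - k) with hdep
  -- What layer `k` remembers of the destination `u`, as a function of the depth: first `u` itself,
  -- then only its centre `y u`, and nothing at the root `v0`.
  set cls : ℕ → V → V := fun d u => if d < R then u else if d < R + D then y u else v0 with hcls
  -- The vertex of `G` above which a remembered value sits.
  set pos : ℕ → V → V :=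
    fun d x => if d < R then q x d else if d < R + D then q' x (d - R) else v0 with hpos
  have hstep : ∀ d, d < R + D → ∀ u, G.Adj (pos d (cls d u)) (pos (d + 1) (cls (d + 1) u)) ∨
      pos d (cls d u) = pos (d + 1) (cls (d + 1) u) := by
    intro d hd u
    simp only [hcls, hpos]
    by_cases h1 : d < R
    · by_cases h2 : d + 1 < R
      · simpa [h1, h2] using hq u d
      · have h3 : d + 1 = R := by omega
        have h4 := hq u d
        rw [h3, hqR] at h4
        simpa [h1, h3, hq'0, show 0 < D by omega] using h4
    · by_cases h2 : d + 1 < R + D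
      · have h4 := hq' (y u) (d - R)
        rw [show d - R + 1 = d + 1 - R by omega] at h4
        simpa [h1, h2, hd, show ¬ d + 1 < R by omega] using h4
      · have h4 := hq' (y u) (d - R)
        rw [show d - R + 1 = D by omega, hq'D] at h4
        simpa [h1, h2, hd, show ¬ d + 1 < R by omega] using h4
  have hadj : ∀ k, k < N → ∀ u,
      G.Adj (pos (dep k) (cls (dep k) u)) (pos (dep (k + 1)) (cls (dep (k + 1)) u)) ∨
      pos (dep k) (cls (dep k) u) = pos (dep (k + 1)) (cls (dep (k + 1)) u) := by
    intro k hk u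
    by_cases h : k < R + D
    · rw [show dep k = k by simp only [hdep]; omega,
        show dep (k + 1) = k + 1 by simp only [hdep]; omega]
      exact hstep k h u
    · rw [show dep k = (N - (k + 1)) + 1 by simp only [hdep]; omega,
        show dep (k + 1) = N - (k + 1) by simp only [hdep]; omega]
      rcases hstep (N - (k + 1)) (by omega) u with h' | h'
      · exact Or.inl h'.symm
      · exact Or.inr h'.symm
  have hdep0 : dep 0 = 0 := by simp [hdep]
  have hdepN : dep N = 0 := by simp [hdep]
  have hNpos : 0 < N := by omega
  -- Only values that are attained become states, so that the stationary distribution is positive.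
  let W : Type := {x : Fin N × V // ∃ u, cls (dep x.1) u = x.2}
  let S : ℕ → V → W := fun k u =>
    if h : k < N then ⟨(⟨k, h⟩, cls (dep k) u), u, rfl⟩
    else ⟨(⟨0, hNpos⟩, cls (dep 0) u), u, rfl⟩
  have hS : ∀ k (h : k < N) u, S k u = ⟨(⟨k, h⟩, cls (dep k) u), u, rfl⟩ :=
    fun k h u => dif_pos h
  have hSN : S N = S 0 := by
    funext u
    rw [hS 0 hNpos]
    exact dif_neg (lt_irrefl N)
  let L : LayeredCycle V W :=
    { π := π, N := N, r := R + D, S := S, lv := fun w => w.1.1, π_pos := hπ, π_sum := hπ1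
      N_ge := by omega
      r_pos := by omega
      r_lt := by omega
      S_N := hSN
      lv_lt := fun w => w.1.1.2
      lv_S := fun k hk u => by rw [hS k hk]
      surj := by
        rintro ⟨⟨k, x⟩, u, hu⟩
        refine ⟨u, ?_⟩
        rw [hS _ k.2]
        exact Subtype.ext (Prod.ext rfl hu)
      S_r := by
        intro u u'
        rw [hS _ (by omega), hS _ (by omega)]
        refine Subtype.ext (Prod.ext rfl ?_)
        have : dep (R + D) = R + D := by simp only [hdep]; omega
        simp [this, hcls] }
  let f : W → V := fun w => pos (dep w.1.1) w.1.2
  have hfS : ∀ k, k ≤ N → ∀ u, f (S k u) = pos (dep k) (cls (dep k) u) := by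
    intro k hk u
    rcases hk.lt_or_eq with h | rfl
    · rw [hS k h]
    · rw [hSN, hS 0 hNpos, hdepN]
      simp only [f, hdep0]
  have hf0 : ∀ u, f (S 0 u) = u := by
    intro u
    rw [hfS 0 (by omega), hdep0]
    simp [hcls, hpos, show 0 < R by omega, hq0]
  have hinj : Function.Injective (S 0) := Function.LeftInverse.injective hf0
  refine ⟨W, inferInstance, inferInstance, L.P, L.pihat, f, Finset.univ.image (S 0),
    L.P_rowStochastic, L.pihat_pos, L.stationary, ?_, ?_, ?_, ?_, ?_⟩
  · intro w w' hw
    by_cases hne : w = w'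
    · exact Or.inr (by rw [hne])
    obtain ⟨u, hu, hu'⟩ := L.exists_of_P_pos hne hw
    have hlt : L.lv w < N := L.lv_lt w
    have h := hadj (L.lv w) hlt u
    rw [← hfS _ hlt.le, ← hfS _ hlt] at h
    rwa [show S (L.lv w) u = w from hu, show S (L.lv w + 1) u = w' from hu'] at h
  · rw [Finset.card_image_of_injective _ hinj, Finset.card_univ]
  · intro u
    have h1 : (Finset.univ.image (S 0)).filter (fun w => f w = u) = {S 0 u} := by
      ext w
      simp only [Finset.mem_filter, Finset.mem_image, Finset.mem_univ, true_and,
        Finset.mem_singleton]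
      constructor
      · rintro ⟨⟨u', rfl⟩, h⟩
        rw [← h, hf0]
      · rintro rfl
        exact ⟨⟨u, rfl⟩, hf0 u⟩
    rw [h1, Finset.sum_singleton]
    have h2 : L.lv (S 0 u) = 0 := L.lv_S 0 hNpos u
    rw [LayeredCycle.pihat, if_pos h2, h2]
    congr 1
    have h3 : ∀ u', L.S 0 u' = S 0 u ↔ u' = u := fun u' => hinj.eq_iff
    simp only [LayeredCycle.M, h3]
    simp [L]
  · refine L.ncard_edges_le.trans ?_
    have hn : ∀ k, (Finset.univ.image fun u => (L.S k u, L.S (k + 1) u)).card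
        ≤ Fintype.card V := fun k => Finset.card_image_le
    -- Between depths `R` and `R + D` both ends of an edge depend on `u` through `y u` only.
    have hyk : ∀ k, R ≤ k → k < R + D + D →
        (Finset.univ.image fun u => (L.S k u, L.S (k + 1) u)).card ≤ Y.card := by
      intro k hk1 hk2
      refine card_image_le_of_factors hyY fun u u' huu' => ?_
      have haux : ∀ k, R ≤ k → k ≤ R + D + D → S k u = S k u' := by
        intro k hk1 hk2
        rw [hS k (by omega), hS k (by omega)]
        refine Subtype.ext (Prod.ext rfl ?_)
        have : ¬ dep k < R := by simp only [hdep]; omega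
        simp [hcls, this, huu']
      exact Prod.ext (haux k hk1 hk2.le) (haux (k + 1) (by omega) hk2)
    change ∑ k ∈ Finset.range (R + D + D + R), _ ≤ _
    rw [add_assoc R D D, Finset.sum_range_add, Finset.sum_range_add]
    have s1 := Finset.sum_le_card_nsmul (Finset.range R) _ _ fun k _ => hn k
    have s2 := Finset.sum_le_card_nsmul (Finset.range (D + D)) _ _ fun k hk =>
      hyk (R + k) (by omega) (by rw [Finset.mem_range] at hk; omega)
    have s3 := Finset.sum_le_card_nsmul (Finset.range R) _ _ fun k _ => hn (R + (D + D) + k)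
    rw [Finset.card_range, smul_eq_mul] at s1 s2 s3
    nlinarith
  · intro t ht w
    have hKt : 5 * L.N * K ≤ t := by
      change 5 * N * K ≤ t
      have h1 : 5 * N * K ≤ 20 * K * D := by nlinarith
      have h2 : ((20 * K * D : ℕ) : ℝ) ≤ t := by
        push_cast
        nlinarith [(Nat.cast_nonneg D : (0 : ℝ) ≤ D)]
      exact h1.trans (by exact_mod_cast h2)
    have hexp : Real.exp (-16) ≤ 1 := Real.exp_le_one_iff.2 (by norm_num)
    exact (tv_le_of_minorized L.P_rowStochastic (fun w => (L.pihat_pos w).le) L.pihat_sum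
      L.stationary hexp L.minorized hKt w).trans hK.le
end

section
/- Let G = (V,E) be a finite connected d-regular simple graph on n vertices with edge expansion h(G) = min_{S ⊆ V, 1 ≤ |S| ≤ n/2} |∂(S)|/|S|, where ∂(S) is the set of edges with exactly one endpoint in S. Let π be a probability distribution on V with π_u > 0 for all u and max_u π_u ≤ K·min_u π_u for some K ≥ 1, and write π₀ = min_u π_u. Define the matrix P^{Ex} by: P^{Ex}_{ij} = π₀/(d·π_i) if (i,j) ∈ E; P^{Ex}_{ii} = 1 − π₀/π_i; and P^{Ex}_{ij} = 0 otherwise. Then: (a) P^{Ex} is row-stochastic with nonnegative entries; (b) P^{Ex} is reversible with respect to π and π is stationary for P^{Ex}; and (c) the conductance satisfies Φ(P^{Ex}) ≥ h(G)/(d·K). -/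
/-!
For `i ≠ j` the quantity `π i * P i j` equals `π₀ / d` on edges and `0` elsewhere. It is symmetric
in `i` and `j`, which is reversibility, and stationarity follows by summing over `i`.

For the conductance, the flow out of `S` is therefore `(π₀ / d) * |∂S|`. This is symmetric under
`S ↦ Sᶜ`, so one may take the side `A ∈ {S, Sᶜ}` with `|A| ≤ n / 2`. There `|∂A| ≥ h(G) * |A|`, while
`π(A) ≤ K * π₀ * |A|` by balance and `π(Aᶜ) ≤ 1`, so that the flow is at least
`h(G) / (d * K) * π(A) * π(Aᶜ)`.
-/

/-- The conductance `Φ(P)` of a chain `P` with stationary distribution `π`: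
the minimum over nonempty proper subsets `S` of
`(Σ_{i∈S, j∉S} π_i P_{ij}) / (π(S)·π(Sᶜ))`. -/
noncomputable def conductance {V : Type*} [Fintype V] [DecidableEq V]
    (P : Matrix V V ℝ) (π : V → ℝ) : ℝ :=
  sInf {x : ℝ | ∃ S : Finset V, S.Nonempty ∧ S ≠ Finset.univ ∧
    x = (∑ i ∈ S, ∑ j ∈ Sᶜ, π i * P i j) / ((∑ i ∈ S, π i) * (∑ j ∈ Sᶜ, π j))}

/-- The edge expansion `h(G) = min_{1 ≤ |S| ≤ n/2} |∂(S)|/|S|`, where `∂(S)` is the set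
of edges with exactly one endpoint in `S`; each such edge is counted by its unique
ordered pair `(i,j)` with `i ∈ S`, `j ∉ S`, `i ~ j`. -/
noncomputable def edgeExpansion {V : Type*} [Fintype V] [DecidableEq V]
    (G : SimpleGraph V) [DecidableRel G.Adj] : ℝ :=
  sInf {x : ℝ | ∃ S : Finset V, S.Nonempty ∧ 2 * S.card ≤ Fintype.card V ∧
    x = ((Finset.univ.filter
          (fun p : V × V => p.1 ∈ S ∧ p.2 ∉ S ∧ G.Adj p.1 p.2)).card : ℝ) / S.card}

lemma edgeExpansion_nonneg {V : Type*} [Fintype V] [DecidableEq V]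
    (G : SimpleGraph V) [DecidableRel G.Adj] : 0 ≤ edgeExpansion G := by
  apply Real.sInf_nonneg
  rintro x ⟨S, -, -, rfl⟩
  positivity

lemma card_boundary_eq_sum {V : Type*} [Fintype V] [DecidableEq V]
    (G : SimpleGraph V) [DecidableRel G.Adj] (S : Finset V) :
    ((Finset.univ.filter
      (fun p : V × V => p.1 ∈ S ∧ p.2 ∉ S ∧ G.Adj p.1 p.2)).card : ℝ)
      = ∑ i ∈ S, ∑ j ∈ Sᶜ, if G.Adj i j then (1 : ℝ) else 0 := by
  have h : Finset.univ.filter (fun p : V × V => p.1 ∈ S ∧ p.2 ∉ S ∧ G.Adj p.1 p.2)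
      = (S ×ˢ Sᶜ).filter (fun p => G.Adj p.1 p.2) := by
    ext p
    simp [and_assoc]
  rw [h, ← Finset.sum_product', Finset.sum_boole]

lemma edgeExpansion_mul_card_le {V : Type*} [Fintype V] [DecidableEq V]
    (G : SimpleGraph V) [DecidableRel G.Adj] (S : Finset V) (hS : S.Nonempty)
    (hc : 2 * S.card ≤ Fintype.card V) :
    edgeExpansion G * S.card ≤ ∑ i ∈ S, ∑ j ∈ Sᶜ, if G.Adj i j then (1 : ℝ) else 0 := by
  have hpos : (0 : ℝ) < S.card := by exact_mod_cast hS.card_pos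
  rw [← card_boundary_eq_sum, ← le_div_iff₀ hpos]
  apply csInf_le
  · refine ⟨0, ?_⟩
    rintro x ⟨T, -, -, rfl⟩
    positivity
  · exact ⟨S, hS, hc, rfl⟩

/-- The conductance bound, with denominators cleared, for a set of at most half the vertices. -/
lemma flow_bound_of_small {V : Type*} [Fintype V] [DecidableEq V]
    (G : SimpleGraph V) [DecidableRel G.Adj] (π : V → ℝ) (d K π₀ : ℝ) (hd : 0 < d) (hK : 0 < K)
    (hπ₀ : 0 ≤ π₀) (hπ : ∀ u, 0 ≤ π u) (hπ1 : ∑ u, π u = 1) (hbal : ∀ u, π u ≤ K * π₀)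
    (S : Finset V) (hS : S.Nonempty) (hc : 2 * S.card ≤ Fintype.card V) :
    edgeExpansion G / (d * K) * ((∑ i ∈ S, π i) * ∑ j ∈ Sᶜ, π j)
      ≤ π₀ / d * ∑ i ∈ S, ∑ j ∈ Sᶜ, if G.Adj i j then (1 : ℝ) else 0 := by
  have hh := edgeExpansion_nonneg G
  have hA : ∑ i ∈ S, π i ≤ S.card * (K * π₀) := by
    simpa using Finset.sum_le_card_nsmul S π (K * π₀) fun i _ => hbal i
  have hA0 : 0 ≤ ∑ i ∈ S, π i := Finset.sum_nonneg fun i _ => hπ i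
  have hB : ∑ j ∈ Sᶜ, π j ≤ 1 := by
    have := Finset.sum_add_sum_compl S π
    linarith
  calc edgeExpansion G / (d * K) * ((∑ i ∈ S, π i) * ∑ j ∈ Sᶜ, π j)
      ≤ edgeExpansion G / (d * K) * (S.card * (K * π₀)) :=
        mul_le_mul_of_nonneg_left ((mul_le_of_le_one_right hA0 hB).trans hA) (by positivity)
    _ = π₀ / d * (edgeExpansion G * S.card) := by
        field_simp
    _ ≤ _ := by
        gcongr
        exact edgeExpansion_mul_card_le G S hS hc

/-- the expander chain `P^{Ex}` realizing a balanced distribution `π`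
(`π_max ≤ K·π_min`, `π₀ = π_min`) on a connected `d`-regular graph `G`:
`P^{Ex}_{ij} = π₀/(d·π_i)` on edges, `P^{Ex}_{ii} = 1 - π₀/π_i`, and `0` otherwise.
It is row-stochastic, reversible with stationary distribution `π`, and its conductance
is at least `h(G)/(d·K)`. -/
theorem expander_chain_properties {V : Type*} [Fintype V] [DecidableEq V]
    (G : SimpleGraph V) [DecidableRel G.Adj] (hconn : G.Connected)
    (d : ℕ) (hd : 1 ≤ d) (hreg : ∀ v, G.degree v = d)
    (π : V → ℝ) (K : ℝ) (hK : 1 ≤ K)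
    (hπ : ∀ u, 0 < π u) (hπ1 : ∑ u, π u = 1)
    (hbal : ∀ u v, π u ≤ K * π v)
    (π₀ : ℝ) (hmin : ∀ u, π₀ ≤ π u) (hatt : ∃ u, π u = π₀)
    (P : Matrix V V ℝ)
    (hP1 : ∀ i j, G.Adj i j → P i j = π₀ / ((d : ℝ) * π i))
    (hP2 : ∀ i, P i i = 1 - π₀ / π i)
    (hP3 : ∀ i j, i ≠ j → ¬G.Adj i j → P i j = 0) :
    -- (a) row-stochastic with nonnegative entries
    ((∀ i j, 0 ≤ P i j) ∧ (∀ i, ∑ j, P i j = 1)) ∧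
    -- (b) reversible with respect to π, and π stationary
    ((∀ i j, π i * P i j = π j * P j i) ∧ (∀ j, ∑ i, π i * P i j = π j)) ∧
    -- (c) conductance lower bound
    edgeExpansion G / ((d : ℝ) * K) ≤ conductance P π := by
  have hπ₀ : 0 < π₀ := by
    obtain ⟨u, hu⟩ := hatt
    exact hu ▸ hπ u
  have hd' : (0 : ℝ) < d := by exact_mod_cast hd
  have hflow : ∀ i j, i ≠ j → π i * P i j = π₀ / d * if G.Adj i j then (1 : ℝ) else 0 := by
    intro i j hij
    have := (hπ i).ne'
    by_cases h : G.Adj i j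
    · rw [hP1 i j h, if_pos h]
      field_simp
    · rw [hP3 i j hij h, if_neg h]
      simp
  have hrow : ∀ i, ∑ j, P i j = 1 := by
    intro i
    have hi := (hπ i).ne'
    have hrest : ∀ j, P i j = (if i = j then 1 - π₀ / π i else 0)
        + (π₀ / (d * π i)) * if G.Adj i j then (1 : ℝ) else 0 := by
      intro j
      by_cases hij : i = j
      · subst hij
        simp [hP2]
      · by_cases h : G.Adj i j
        · simp [hij, h, hP1 i j h]
        · simp [hij, h, hP3 i j hij h]
    have hdeg : ∑ j, (if G.Adj i j then (1 : ℝ) else 0) = d := by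
      rw [Finset.sum_boole, ← hreg i, ← G.card_neighborFinset_eq_degree,
        G.neighborFinset_eq_filter]
    rw [Finset.sum_congr rfl fun j _ => hrest j, Finset.sum_add_distrib, ← Finset.mul_sum, hdeg,
      Finset.sum_ite_eq, if_pos (Finset.mem_univ i)]
    field_simp
    ring
  have hrev : ∀ i j, π i * P i j = π j * P j i := by
    intro i j
    by_cases hij : i = j
    · rw [hij]
    · rw [hflow i j hij, hflow j i (Ne.symm hij)]
      simp only [G.adj_comm]
  refine ⟨⟨?_, hrow⟩, ⟨hrev, ?_⟩, ?_⟩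
  · intro i j
    have hi := hπ i
    by_cases hij : i = j
    · subst hij
      rw [hP2, sub_nonneg, div_le_one hi]
      exact hmin i
    · by_cases h : G.Adj i j
      · rw [hP1 i j h]
        positivity
      · rw [hP3 i j hij h]
  · intro j
    rw [Finset.sum_congr rfl fun i _ => hrev i j, ← Finset.mul_sum, hrow, mul_one]
  · apply le_csInf
    -- A singleton is a proper subset because each vertex has a neighbour; without a proper subset
    -- the infimum would take its default value `0`.
    · obtain ⟨u, -⟩ := hatt
      obtain ⟨v, hv⟩ := (G.degree_pos_iff_exists_adj u).1 (by rw [hreg]; exact hd)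
      refine ⟨_, {u}, Finset.singleton_nonempty u, fun h => hv.ne ?_, rfl⟩
      have hvu : v ∈ ({u} : Finset V) := h ▸ Finset.mem_univ v
      exact (Finset.mem_singleton.1 hvu).symm
    · rintro x ⟨S, hS, hne, rfl⟩
      have hSc : Sᶜ.Nonempty := by
        rwa [Finset.nonempty_iff_ne_empty, Ne, Finset.compl_eq_empty_iff]
      have hpos : 0 < (∑ i ∈ S, π i) * ∑ j ∈ Sᶜ, π j :=
        mul_pos (Finset.sum_pos (fun i _ => hπ i) hS) (Finset.sum_pos (fun i _ => hπ i) hSc)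
      have hcut : ∑ i ∈ S, ∑ j ∈ Sᶜ, π i * P i j
          = π₀ / d * ∑ i ∈ S, ∑ j ∈ Sᶜ, if G.Adj i j then (1 : ℝ) else 0 := by
        simp only [Finset.mul_sum]
        refine Finset.sum_congr rfl fun i hi => Finset.sum_congr rfl fun j hj => ?_
        exact hflow i j fun h => Finset.mem_compl.1 hj (h ▸ hi)
      have hbal₀ : ∀ u, π u ≤ K * π₀ := by
        obtain ⟨w, hw⟩ := hatt
        exact fun u => hw ▸ hbal u w
      have hbound := flow_bound_of_small G π d K π₀ hd' (by linarith) hπ₀.le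
        (fun u => (hπ u).le) hπ1 hbal₀
      rw [le_div_iff₀ hpos, hcut]
      by_cases hc : 2 * S.card ≤ Fintype.card V
      · exact hbound S hS hc
      · have hcard := Finset.card_add_card_compl S
        have hb := hbound Sᶜ hSc (by omega)
        rw [compl_compl, Finset.sum_comm, mul_comm (∑ i ∈ Sᶜ, π i)] at hb
        simpa only [G.adj_comm] using hb
end
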